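/- arXiv:1805.09757 — 2 statements merged into one kernel-verified Lean document; each statement's English description precedes it below -/
import Mathlib

section
/- In a hidden Markov tree, the forward outgoing message satisfies, for every node n and every label y_n ∈ {0,1}, f_n^o(y_n) = P(x_{tree(n)}, y_n), i.e. the recursively defined outgoing message equals the marginal joint probability of the feature likelihood factors of all nodes in the subtree rooted at n (including n itself) together with the label y_n. -/
/-!
The marginal is computed by eliminating variables one node at a time.  All sums run over the full
labelings `Y : Fin N → Fin 2`, so eliminating a variable shows up as a factor `2`: a summand that
does not depend on a node's label is counted once for each of its two values.

* Outside `tree n` (`sum_mul_prod_nodeFactor`): a nonempty set closed under passing to the child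
  has a node `n` that is not the child of any node of the set.  The class factors of the remaining
  nodes sum out by induction, since the class factor of `n` does not involve their labels, and then
  the sum over the label of `n` is `∑ v, P(v | parents) = 1`.
* Inside `tree n` (`two_pow_mul_sum_eq_sum_messages`): on a set `D` closed under passing to parents,
  peel off a node `n` whose child is not in `D`.  The induction hypothesis for `D \ {n}` replaces
  everything above `n` by the messages `f_k^o` of its parents, and summing over the labels of those
  parents is the message recursion.

Taking `D = tree n` and the indicator of `Y n = y`, the powers of two cancel.
-/

open Finset

/-- A finite reverse tree: every node has at most one child (`child n = none` only
for the unique root), and the parent relation (`child k = some n` meaning `k` is a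
parent of `n`) is acyclic. -/
structure RevTree (N : ℕ) where
  child : Fin N → Option (Fin N)
  acyclic : ∀ n : Fin N, ¬ Relation.TransGen (fun a b => child a = some b) n n
  root : Fin N
  child_root : child root = none
  root_unique : ∀ n : Fin N, child n = none → n = root

namespace RevTree

variable {N : ℕ}

/-- The set of parents of a node. -/
def parents (T : RevTree N) (n : Fin N) : Finset (Fin N) :=
  Finset.univ.filter fun k => T.child k = some n

/-- A leaf is a node with no parents. -/
def IsLeaf (T : RevTree N) (n : Fin N) : Prop :=
  T.parents n = ∅

instance (T : RevTree N) (n : Fin N) : Decidable (T.IsLeaf n) :=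
  inferInstanceAs (Decidable (T.parents n = ∅))

open scoped Classical in
/-- `tree n`: all nodes from which `n` is reachable by following child edges,
including `n` itself. -/
noncomputable def tree (T : RevTree N) (n : Fin N) : Finset (Fin N) :=
  Finset.univ.filter fun m =>
    Relation.ReflTransGen (fun a b => T.child a = some b) m n

/-- `subtree n = tree n \ {n}`: the strict descendants (in the parent direction). -/
noncomputable def subtree (T : RevTree N) (n : Fin N) : Finset (Fin N) :=
  T.tree n \ {n}

/-- `pre n`: complement of `tree n`. -/
noncomputable def pre (T : RevTree N) (n : Fin N) : Finset (Fin N) :=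
  Finset.univ \ T.tree n

/-- `passed n`: complement of `subtree n`. -/
noncomputable def passed (T : RevTree N) (n : Fin N) : Finset (Fin N) :=
  Finset.univ \ T.subtree n

/-- The siblings of `n` with respect to its child `c`: the other parents of `c`. -/
def siblings (T : RevTree N) (n c : Fin N) : Finset (Fin N) :=
  T.parents c \ {n}

end RevTree

/-- Leaf class prior `P(y) = π^y (1-π)^(1-y)`. -/
noncomputable def leafPrior (π : ℝ) (y : Fin 2) : ℝ :=
  π ^ (y : ℕ) * (1 - π) ^ (1 - (y : ℕ))

/-- Class transition probability of a node with label `y` given the product `z`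
of its parents' labels: `ρ^(yz) (1-ρ)^((1-y)z) 0^(y(1-z)) 1^((1-y)(1-z))`
(note `(0:ℝ)^0 = 1`). -/
noncomputable def transProb (ρ : ℝ) (y z : ℕ) : ℝ :=
  ρ ^ (y * z) * (1 - ρ) ^ ((1 - y) * z) * (0 : ℝ) ^ (y * (1 - z)) *
    (1 : ℝ) ^ ((1 - y) * (1 - z))

/-- The class factor of node `n` in a full labeling `Y`: the leaf prior for leaves,
and the transition probability given the product of the parents' labels otherwise. -/
noncomputable def nodeFactor {N : ℕ} (T : RevTree N) (π ρ : ℝ) (Y : Fin N → Fin 2)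
    (n : Fin N) : ℝ :=
  if T.IsLeaf n then leafPrior π (Y n)
  else transProb ρ (Y n : ℕ) (∏ k ∈ T.parents n, (Y k : ℕ))

/-- The marginal `P(x_S, y_T)`: sum over all labelings agreeing with `σ` on `Tset`
of the product of the feature likelihoods over `S` times the product of all class
factors. -/
noncomputable def marginal {N : ℕ} (T : RevTree N) (π ρ : ℝ) (px : Fin N → Fin 2 → ℝ)
    (S Tset : Finset (Fin N)) (σ : Fin N → Fin 2) : ℝ :=
  ∑ Y ∈ Finset.univ.filter (fun Y : Fin N → Fin 2 => ∀ t ∈ Tset, Y t = σ t),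
    (∏ m ∈ S, px m (Y m)) * ∏ m, nodeFactor T π ρ Y m

/-- Assignments of binary labels to the nodes in `S` (encoded as functions on all
nodes that are `0` outside `S`, so each assignment to `S` occurs exactly once). -/
def assignments {N : ℕ} (S : Finset (Fin N)) : Finset (Fin N → Fin 2) :=
  Finset.univ.filter fun u => ∀ k ∉ S, u k = 0

/-! ### Resumming labels -/

/-- The sum of a function over all labelings, with the labels on `P` resummed: each labeling is
counted `2 ^ #P` times. -/
lemma sum_sum_assignments {N : ℕ} (P : Finset (Fin N)) (H : (Fin N → Fin 2) → ℝ) :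
    ∑ Y, ∑ u ∈ assignments P, H (P.piecewise u Y) = 2 ^ #P * ∑ Y, H Y := by
  have hcard : #(assignments P) = 2 ^ #P := by
    have h : assignments P = Fintype.piFinset fun k => if k ∈ P then univ else {0} := by
      ext u
      simp only [assignments, mem_filter, mem_univ, true_and, Fintype.mem_piFinset]
      refine forall_congr' fun k => ?_
      by_cases hk : k ∈ P <;> simp [hk]
    rw [h, Fintype.card_piFinset]
    simp [apply_ite Finset.card]
  -- Exchanging the labels of `Y` and `u` on `P` is an involution on the pairs `(Y, u)`.
  have hswap : ∑ p ∈ univ ×ˢ assignments P, H (P.piecewise p.2 p.1)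
      = ∑ p ∈ univ ×ˢ assignments P, H p.1 := by
    have hmem : ∀ p ∈ (univ : Finset (Fin N → Fin 2)) ×ˢ assignments P,
        (P.piecewise p.2 p.1, P.piecewise p.1 0) ∈ univ ×ˢ assignments P := by
      intro p _
      simp +contextual [assignments]
    have hinv : ∀ p ∈ (univ : Finset (Fin N → Fin 2)) ×ˢ assignments P,
        (P.piecewise (P.piecewise p.1 0) (P.piecewise p.2 p.1),
          P.piecewise (P.piecewise p.2 p.1) 0) = p := by
      rintro ⟨Y, u⟩ hp
      simp only [assignments, mem_product, mem_univ, mem_filter, true_and] at hp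
      ext k <;> by_cases hk : k ∈ P <;> simp [hk, hp]
    exact Finset.sum_nbij' (fun p => (P.piecewise p.2 p.1, P.piecewise p.1 0))
      (fun p => (P.piecewise p.2 p.1, P.piecewise p.1 0)) hmem hmem hinv hinv (fun _ _ => rfl)
  rw [← Finset.sum_product', hswap, Finset.sum_product]
  simp [hcard, Finset.mul_sum]

lemma sum_sum_update {N : ℕ} (m : Fin N) (H : (Fin N → Fin 2) → ℝ) :
    ∑ Y, ∑ v, H (Function.update Y m v) = 2 * ∑ Y, H Y := by
  have h := sum_sum_assignments {m} H
  rw [card_singleton, pow_one] at h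
  rw [← h]
  refine Finset.sum_congr rfl fun Y _ => ?_
  refine Finset.sum_nbij' (fun v => Function.update 0 m v) (fun u => u m) ?_ ?_ ?_ ?_ ?_
  · intro v _
    simp +contextual [assignments]
  · simp
  · simp
  · intro u hu
    simp only [assignments, mem_filter, mem_univ, true_and, mem_singleton] at hu
    ext k
    by_cases hk : k = m
    · subst hk; simp
    · simp [hk, hu k hk]
  · intro v _
    simp [Finset.piecewise_singleton]

/-! ### Normalization of the class factors -/

lemma sum_leafPrior (π : ℝ) : ∑ v : Fin 2, leafPrior π v = 1 := by
  simp [leafPrior]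

/-- The transition probabilities sum to one; for `z ≥ 2` they would not. -/
lemma sum_transProb (ρ : ℝ) {z : ℕ} (hz : z ≤ 1) : ∑ v : Fin 2, transProb ρ (v : ℕ) z = 1 := by
  interval_cases z <;> simp [transProb]

/-! ### Combinatorics of the reverse tree -/

namespace RevTree

variable {N : ℕ} (T : RevTree N)

lemma mem_parents {k n : Fin N} : k ∈ T.parents n ↔ T.child k = some n := by
  simp [parents]

lemma mem_tree {m n : Fin N} : m ∈ T.tree n ↔
    Relation.ReflTransGen (fun a b => T.child a = some b) m n := by
  simp [tree]

lemma child_ne_self (n : Fin N) : T.child n ≠ some n := fun h => T.acyclic n (.single h)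

lemma exists_forall_child_notMem {S : Finset (Fin N)} (hS : S.Nonempty) :
    ∃ n ∈ S, ∀ c ∈ S, T.child n ≠ some c := by
  let r : Fin N → Fin N → Prop := fun a b => Relation.TransGen (fun a b => T.child a = some b) b a
  have : IsTrans (Fin N) r := ⟨fun _ _ _ h₁ h₂ => h₂.trans h₁⟩
  have : Std.Irrefl r := ⟨T.acyclic⟩
  obtain ⟨n, hn, h⟩ := (Finite.wellFounded_of_trans_of_irrefl r).has_min (S : Set (Fin N)) hS
  exact ⟨n, hn, fun c hc hnc => h c hc (.single hnc)⟩

lemma exists_forall_parent_notMem {S : Finset (Fin N)} (hS : S.Nonempty) :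
    ∃ n ∈ S, ∀ k ∈ S, T.child k ≠ some n := by
  let r : Fin N → Fin N → Prop := Relation.TransGen (fun a b => T.child a = some b)
  have : IsTrans (Fin N) r := ⟨fun _ _ _ h₁ h₂ => h₁.trans h₂⟩
  have : Std.Irrefl r := ⟨T.acyclic⟩
  obtain ⟨n, hn, h⟩ := (Finite.wellFounded_of_trans_of_irrefl r).has_min (S : Set (Fin N)) hS
  exact ⟨n, hn, fun c hc hnc => h c hc (.single hnc)⟩

/-- The nodes of `D` whose child also lies in `D`. When `D` is closed under passing to parents,
these are the nodes whose labels have been summed out once `D` is summarised by messages. -/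
def inner (D : Finset (Fin N)) : Finset (Fin N) :=
  D.filter fun m => ∃ c ∈ D, T.child m = some c

lemma mem_inner {D : Finset (Fin N)} {m : Fin N} :
    m ∈ T.inner D ↔ m ∈ D ∧ ∃ c ∈ D, T.child m = some c := by
  simp [inner]

lemma inner_tree (n : Fin N) : T.inner (T.tree n) = (T.tree n).erase n := by
  ext m
  simp only [mem_inner, mem_erase, mem_tree]
  constructor
  · rintro ⟨hm, c, hc, hmc⟩
    refine ⟨?_, hm⟩
    rintro rfl
    exact T.acyclic m (.head' hmc hc)
  · rintro ⟨hne, hm⟩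
    refine ⟨hm, ?_⟩
    rcases hm.cases_head with h | ⟨c, hmc, hc⟩
    · exact absurd h hne
    · exact ⟨c, hc, hmc⟩

end RevTree

/-! ### Elimination of variables -/

section

variable {N : ℕ} (T : RevTree N) (π ρ : ℝ)

/-- A class factor depends only on the labels of its node and of that node's parents. -/
lemma nodeFactor_congr {n : Fin N} {Y Z : Fin N → Fin 2} (hn : Y n = Z n)
    (hp : ∀ k, T.child k = some n → Y k = Z k) :
    nodeFactor T π ρ Y n = nodeFactor T π ρ Z n := by
  have h : ∏ k ∈ T.parents n, (Y k : ℕ) = ∏ k ∈ T.parents n, (Z k : ℕ) :=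
    Finset.prod_congr rfl fun k hk => by rw [hp k (T.mem_parents.1 hk)]
  simp only [nodeFactor, hn, h]

lemma sum_nodeFactor_update (Y : Fin N → Fin 2) (n : Fin N) :
    ∑ v, nodeFactor T π ρ (Function.update Y n v) n = 1 := by
  by_cases hl : T.IsLeaf n
  · simpa [nodeFactor, hl] using sum_leafPrior π
  · have h : ∀ v, ∏ k ∈ T.parents n, (Function.update Y n v k : ℕ)
        = ∏ k ∈ T.parents n, (Y k : ℕ) := by
      intro v
      refine Finset.prod_congr rfl fun k hk => ?_
      rw [Function.update_of_ne]
      rintro rfl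
      exact T.child_ne_self k (T.mem_parents.1 hk)
    simp only [nodeFactor, hl, if_false, h, Function.update_self]
    exact sum_transProb ρ (Finset.prod_le_one' fun k _ => by omega)

/-- The class factors of a set `S` closed under passing to the child sum out to one against any
function of the labels outside `S`. -/
lemma sum_mul_prod_nodeFactor (S : Finset (Fin N))
    (hS : ∀ s ∈ S, ∀ c, T.child s = some c → c ∈ S)
    (F : (Fin N → Fin 2) → ℝ) (hF : DependsOn F {m | m ∉ S}) :
    2 ^ #S * ∑ Y, F Y * ∏ m ∈ S, nodeFactor T π ρ Y m = ∑ Y, F Y := by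
  induction hk : #S generalizing S F with
  | zero =>
    rw [Finset.card_eq_zero] at hk
    simp [hk]
  | succ k ih =>
    obtain ⟨n, hn, hmin⟩ := T.exists_forall_parent_notMem (Finset.card_pos.1 (by omega : 0 < #S))
    have hstep := ih (S.erase n)
      (fun s hs c hc => mem_erase.2
        ⟨fun h => hmin s (mem_of_mem_erase hs) (h ▸ hc), hS s (mem_of_mem_erase hs) c hc⟩)
      (fun Y => F Y * nodeFactor T π ρ Y n)
      (by
        intro Y Z h
        have h₁ : F Y = F Z := hF fun i hi => h i fun hi' => hi (mem_of_mem_erase hi')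
        have h₂ : nodeFactor T π ρ Y n = nodeFactor T π ρ Z n :=
          nodeFactor_congr T π ρ (h n (by simp)) fun k hk =>
            h k fun hk' => hmin k (mem_of_mem_erase hk') hk
        simp only [h₁, h₂])
      (by rw [card_erase_of_mem hn]; omega)
    have hprod : ∀ Y, F Y * ∏ m ∈ S, nodeFactor T π ρ Y m
        = F Y * nodeFactor T π ρ Y n * ∏ m ∈ S.erase n, nodeFactor T π ρ Y m := by
      intro Y
      rw [← Finset.mul_prod_erase S _ hn, mul_assoc]
    have hsum : 2 * ∑ Y, F Y * nodeFactor T π ρ Y n = ∑ Y, F Y := by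
      rw [← sum_sum_update n]
      refine Finset.sum_congr rfl fun Y _ => ?_
      have : ∀ v, F (Function.update Y n v) = F Y := fun v =>
        hF fun i hi => Function.update_of_ne (fun h : i = n => hi (h ▸ hn)) _ _
      simp only [this]
      rw [← Finset.mul_sum, sum_nodeFactor_update, mul_one]
    simp only [hprod]
    rw [pow_succ', mul_assoc, hstep, hsum]

variable (px fi fo : Fin N → Fin 2 → ℝ)

/-- The message recursion, written uniformly for leaves and non-leaves. -/
lemma sum_nodeFactor_piecewise
    (hfiLeaf : ∀ n, T.IsLeaf n → ∀ y : Fin 2, fi n y = leafPrior π y)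
    (hfiInt : ∀ n, ¬ T.IsLeaf n → ∀ y : Fin 2,
      fi n y = ∑ u ∈ assignments (T.parents n),
        transProb ρ (y : ℕ) (∏ k ∈ T.parents n, (u k : ℕ)) *
          ∏ k ∈ T.parents n, fo k (u k))
    (n : Fin N) (Y : Fin N → Fin 2) :
    ∑ u ∈ assignments (T.parents n), nodeFactor T π ρ ((T.parents n).piecewise u Y) n *
      ∏ k ∈ T.parents n, fo k (u k) = fi n (Y n) := by
  have hn : n ∉ T.parents n := fun h => T.child_ne_self n (T.mem_parents.1 h)
  by_cases hl : T.IsLeaf n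
  · have hP : T.parents n = ∅ := hl
    have h0 : assignments (∅ : Finset (Fin N)) = {0} := by
      ext u
      simp [assignments, funext_iff]
    rw [hfiLeaf n hl, hP, h0]
    simp [nodeFactor, hl]
  · rw [hfiInt n hl]
    refine Finset.sum_congr rfl fun u _ => ?_
    have : ∏ k ∈ T.parents n, ((T.parents n).piecewise u Y k : ℕ)
        = ∏ k ∈ T.parents n, (u k : ℕ) :=
      Finset.prod_congr rfl fun k hk => by rw [Finset.piecewise_eq_of_mem _ _ _ hk]
    simp only [nodeFactor, hl, if_false, this, Finset.piecewise_eq_of_notMem _ _ _ hn]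

/-- On a set `D` closed under passing to parents, summing out the nodes whose child is in `D`
replaces all factors on `D` by the outgoing messages of the remaining nodes of `D`. -/
lemma two_pow_mul_sum_eq_sum_messages
    (hfiLeaf : ∀ n, T.IsLeaf n → ∀ y : Fin 2, fi n y = leafPrior π y)
    (hfiInt : ∀ n, ¬ T.IsLeaf n → ∀ y : Fin 2,
      fi n y = ∑ u ∈ assignments (T.parents n),
        transProb ρ (y : ℕ) (∏ k ∈ T.parents n, (u k : ℕ)) *
          ∏ k ∈ T.parents n, fo k (u k))
    (hfo : ∀ n y, fo n y = fi n y * px n y)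
    (D : Finset (Fin N)) (hD : ∀ k c, T.child k = some c → c ∈ D → k ∈ D)
    (F : (Fin N → Fin 2) → ℝ) (hF : DependsOn F {m | m ∉ T.inner D}) :
    2 ^ #(T.inner D) * ∑ Y, F Y * ∏ m ∈ D, (px m (Y m) * nodeFactor T π ρ Y m)
      = ∑ Y, F Y * ∏ m ∈ D \ T.inner D, fo m (Y m) := by
  induction hk : #D generalizing D F with
  | zero =>
    rw [Finset.card_eq_zero] at hk
    simp [hk, RevTree.inner]
  | succ k ih =>
    obtain ⟨n, hn, hmax⟩ := T.exists_forall_child_notMem (Finset.card_pos.1 (by omega : 0 < #D))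
    set D' := D.erase n with hD'
    set P := T.parents n with hP
    have hinner : T.inner D = T.inner D' ∪ P := by
      ext m
      simp only [mem_union, RevTree.mem_inner, hP, RevTree.mem_parents, hD', mem_erase]
      constructor
      · rintro ⟨hm, c, hc, hmc⟩
        by_cases hcn : c = n
        · exact Or.inr (hcn ▸ hmc)
        · exact Or.inl ⟨⟨fun h => hmax c hc (h ▸ hmc), hm⟩, c, ⟨hcn, hc⟩, hmc⟩
      · rintro (⟨⟨_, hm⟩, c, ⟨_, hc⟩, hmc⟩ | h)
        · exact ⟨hm, c, hc, hmc⟩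
        · exact ⟨hD m n h hn, n, hn, h⟩
    have hdisj : Disjoint (T.inner D') P := by
      rw [Finset.disjoint_left]
      intro m hm hmP
      obtain ⟨_, c, hc, hmc⟩ := T.mem_inner.1 hm
      rw [hP, RevTree.mem_parents, hmc, Option.some.injEq] at hmP
      exact (mem_erase.1 hc).1 hmP
    have hPsub : P ⊆ D' \ T.inner D' := by
      intro m hm
      refine mem_sdiff.2 ⟨?_, fun h => Finset.disjoint_left.1 hdisj h hm⟩
      have hmn := T.mem_parents.1 hm
      exact mem_erase.2 ⟨fun h => T.child_ne_self n (h ▸ hmn), hD m n hmn hn⟩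
    have hn_inner : n ∉ T.inner D := fun h => by
      obtain ⟨_, c, hc, hnc⟩ := T.mem_inner.1 h
      exact hmax c hc hnc
    have houter : D \ T.inner D = insert n ((D' \ T.inner D') \ P) := by
      rw [sdiff_sdiff_left, sup_eq_union, ← hinner, hD', ← insert_sdiff_of_notMem _ hn_inner,
        insert_erase hn]
    have hn_out : n ∉ (D' \ T.inner D') \ P := by simp [hD']
    have hnP : n ∉ P := fun h => T.child_ne_self n (T.mem_parents.1 h)
    have hstep := ih D'
      (fun k c hkc hc => mem_erase.2
        ⟨fun h => hmax c (mem_of_mem_erase hc) (h ▸ hkc), hD k c hkc (mem_of_mem_erase hc)⟩)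
      (fun Y => F Y * (px n (Y n) * nodeFactor T π ρ Y n))
      (by
        intro Y Z h
        have h₀ : Y n = Z n := h n fun h' => hn_inner (hinner ▸ mem_union_left _ h')
        have h₁ : F Y = F Z := hF fun i hi => h i fun hi' => hi (hinner ▸ mem_union_left _ hi')
        have h₂ : nodeFactor T π ρ Y n = nodeFactor T π ρ Z n :=
          nodeFactor_congr T π ρ h₀ fun k hk =>
            h k (Finset.disjoint_right.1 hdisj (T.mem_parents.2 hk))
        simp only [h₀, h₁, h₂])
      (by rw [hD', card_erase_of_mem hn]; omega)
    have hprod : ∀ Y, F Y * ∏ m ∈ D, (px m (Y m) * nodeFactor T π ρ Y m)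
        = F Y * (px n (Y n) * nodeFactor T π ρ Y n) *
          ∏ m ∈ D', (px m (Y m) * nodeFactor T π ρ Y m) := by
      intro Y
      rw [← Finset.mul_prod_erase D _ hn]
      ring
    simp only [hprod]
    rw [hinner, card_union_of_disjoint hdisj, pow_add, mul_comm (2 ^ _), mul_assoc, hstep,
      ← sum_sum_assignments, ← hinner, houter]
    refine Finset.sum_congr rfl fun Y _ => ?_
    rw [Finset.prod_insert hn_out, hfo,
      ← sum_nodeFactor_piecewise T π ρ fi fo hfiLeaf hfiInt n Y, ← hP]
    simp only [Finset.sum_mul, Finset.mul_sum]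
    refine Finset.sum_congr rfl fun u _ => ?_
    have h₁ : F (P.piecewise u Y) = F Y := hF fun i hi =>
      Finset.piecewise_eq_of_notMem _ _ _ fun h => hi (hinner ▸ mem_union_right _ h)
    have h₂ : ∏ m ∈ D' \ T.inner D', fo m (P.piecewise u Y m)
        = (∏ m ∈ (D' \ T.inner D') \ P, fo m (Y m)) * ∏ m ∈ P, fo m (u m) := by
      rw [← Finset.prod_sdiff hPsub]
      congr 1
      · exact Finset.prod_congr rfl fun m hm => by
          rw [Finset.piecewise_eq_of_notMem _ _ _ (mem_sdiff.1 hm).2]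
      · exact Finset.prod_congr rfl fun m hm => by
          rw [Finset.piecewise_eq_of_mem _ _ _ hm]
    rw [h₁, h₂, Finset.piecewise_eq_of_notMem _ _ _ hnP]
    ring

end

/-- in a hidden Markov tree, the forward outgoing message satisfies
`f_n^o(y_n) = P(x_{tree(n)}, y_n)` for every node `n` and label `y_n`. -/
theorem forward_outgoing_message_eq_marginal
{N : ℕ} (T : RevTree N) (π ρ : ℝ)
    (hπ : π ∈ Set.Ioo (0 : ℝ) 1) (hρ : ρ ∈ Set.Ioo (0 : ℝ) 1)
    (px : Fin N → Fin 2 → ℝ) (hpx : ∀ n y, 0 ≤ px n y)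
(fi fo : Fin N → Fin 2 → ℝ)
    (hfiLeaf : ∀ n, T.IsLeaf n → ∀ y : Fin 2, fi n y = leafPrior π y)
    (hfiInt : ∀ n, ¬ T.IsLeaf n → ∀ y : Fin 2,
      fi n y = ∑ u ∈ assignments (T.parents n),
        transProb ρ (y : ℕ) (∏ k ∈ T.parents n, (u k : ℕ)) *
          ∏ k ∈ T.parents n, fo k (u k))
    (hfo : ∀ n y, fo n y = fi n y * px n y) :
    ∀ (n : Fin N) (y : Fin 2),
      fo n y = marginal T π ρ px (T.tree n) {n} (fun _ => y) := by
  intro n y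
  let F : (Fin N → Fin 2) → ℝ := fun Y => if Y n = y then 1 else 0
  have hnt : n ∈ T.tree n := T.mem_tree.2 .refl
  have hclosed : ∀ k c, T.child k = some c → c ∈ T.tree n → k ∈ T.tree n :=
    fun k c hkc hc => T.mem_tree.2 (.head hkc (T.mem_tree.1 hc))
  have hmarg : marginal T π ρ px (T.tree n) {n} (fun _ => y)
      = ∑ Y, (F Y * ∏ m ∈ T.tree n, (px m (Y m) * nodeFactor T π ρ Y m)) *
          ∏ m ∈ (T.tree n)ᶜ, nodeFactor T π ρ Y m := by
    simp only [marginal, mem_singleton, forall_eq, Finset.sum_filter, F]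
    refine Finset.sum_congr rfl fun Y _ => ?_
    rw [← Finset.prod_mul_prod_compl (T.tree n) (fun m => nodeFactor T π ρ Y m),
      Finset.prod_mul_distrib]
    split_ifs <;> ring
  have houtside := sum_mul_prod_nodeFactor T π ρ (T.tree n)ᶜ
    (fun s hs c hsc => mem_compl.2 fun hc => mem_compl.1 hs (hclosed s c hsc hc))
    (fun Y => F Y * ∏ m ∈ T.tree n, (px m (Y m) * nodeFactor T π ρ Y m))
    (by
      intro Y Z h
      have h' : ∀ m ∈ T.tree n, Y m = Z m := fun m hm => h m (by simpa using hm)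
      simp only [F, h' n hnt]
      congr 1
      refine Finset.prod_congr rfl fun m hm => ?_
      rw [h' m hm, nodeFactor_congr T π ρ (h' m hm) fun k hk => h' k (hclosed k m hk hm)])
  have hinside := two_pow_mul_sum_eq_sum_messages T π ρ px fi fo hfiLeaf hfiInt hfo
    (T.tree n) hclosed F (by
      intro Y Z h
      have : Y n = Z n := h n (by simp [T.inner_tree])
      simp only [F, this])
  have hcount : 2 * ∑ Y, F Y * ∏ m ∈ T.tree n \ T.inner (T.tree n), fo m (Y m)
      = 2 ^ N * fo n y := by
    have : T.tree n \ T.inner (T.tree n) = {n} := by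
      rw [T.inner_tree, sdiff_erase_self hnt]
    rw [this, ← sum_sum_update n]
    simp [F]
  have hN : N = #(T.tree n)ᶜ + (#(T.inner (T.tree n)) + 1) := by
    rw [T.inner_tree, card_erase_add_one hnt, card_compl_add_card, Fintype.card_fin]
  rw [← hmarg] at houtside
  rw [← hinside, ← houtside] at hcount
  have hpow : (2 : ℝ) ^ N = 2 ^ #(T.tree n)ᶜ * (2 ^ #(T.inner (T.tree n)) * 2) := by
    rw [← pow_succ, ← pow_add, ← hN]
  have h0 : (2 : ℝ) ^ N ≠ 0 := by positivity
  refine mul_left_cancel₀ h0 ?_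
  rw [← hcount, hpow]
  ring
end

section
/- In a hidden Markov tree, the backward outgoing message satisfies, for every node n and every label y_n ∈ {0,1}, g_n^o(y_n) · P(y_n) = P(x_{passed(n)}, y_n), where P(y_n) denotes the marginal probability of the label of node n; equivalently, since P(y_n) > 0 when π, ρ ∈ (0,1), g_n^o(y_n) = P(x_{passed(n)} | y_n). -/
/-!
The statement is reduced to one identity about partition functions. For arbitrary node weights `w`
let `Z w` (`partitionFn`) be the sum over all labelings of `∏ w m (Y m)` times the class factors,
and let `f^w` be the forward outgoing messages computed with `w` in place of the feature
likelihoods (`IsForward`). If `w` agrees with `px` outside `tree n`, then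
`Z w = ∑ y, f^w n y * gi n y` (`partitionFn_eq_sum_forward_mul_backward`).

* At the root this says `Z w = ∑ y, f^w root y`, which is variable elimination
  (`partitionFn_eq_sum_forward_root`): nodes are absorbed into messages one at a time, parents
  before children, and the labels that have been summed out are pinned to `0`.
* The identity passes from a child `c` to a parent `n` by unfolding the recursion of `f^w c`,
  splitting off the label of `n`, and recognizing the recursion of `gi n`; the weights `w` and `px`
  coincide on `c` and on the trees of the siblings of `n`, so the messages there agree
  (`IsForward.congr`).

Both marginals in the theorem are partition functions: conditioning on `y_n = y` is a weight
`[y_n = y]` at `n`, and omitting the features on the subtree means putting weight `1` there. With the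
likelihoods on `passed n`, the identity evaluates the right-hand side as
`fi₁ n y * px n y * gi n y`, where `fi₁` is the forward message for weights `1` on the subtree. With
all likelihoods equal to `1`, the backward messages are identically `1` because class factors and
forward messages are normalized (`IsForward.sum_eq_one`), so `P(y_n) = fi₁ n y`.
-/


open Finset

namespace HMT

variable {N : ℕ}

/-! ### Sums over partial assignments -/

/-- Every labeling is uniquely an assignment to `P` together with an assignment to `Pᶜ`. -/
lemma sum_split (P : Finset (Fin N)) (f : (Fin N → Fin 2) → ℝ) :
    ∑ Y, f Y = ∑ v ∈ assignments Pᶜ, ∑ u ∈ assignments P,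
      f (fun k => if k ∈ P then u k else v k) := by
  rw [← Finset.sum_product']
  refine Finset.sum_bij' (fun Y _ => ((fun k => if k ∈ P then 0 else Y k),
    (fun k => if k ∈ P then Y k else 0)))
    (fun q _ => fun k => if k ∈ P then q.2 k else q.1 k) ?_ ?_ ?_ ?_ ?_
  · intro Y _
    simp +contextual [assignments]
  · simp
  · intro Y _
    funext k
    by_cases hk : k ∈ P <;> simp [hk]
  · rintro ⟨v, u⟩ h
    simp only [assignments, Finset.mem_product, Finset.mem_filter, Finset.mem_univ, true_and,
      Finset.mem_compl, not_not] at h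
    ext k <;> by_cases hk : k ∈ P <;> simp [hk, h.1 k, h.2 k]
  · intro Y _
    congr 1
    funext k
    by_cases hk : k ∈ P <;> simp [hk]

lemma sum_assignments_insert {n : Fin N} {S : Finset (Fin N)} (hn : n ∉ S)
    (G : (Fin N → Fin 2) → ℝ) :
    ∑ u ∈ assignments (insert n S), G u =
      ∑ y : Fin 2, ∑ u ∈ assignments S, G (Function.update u n y) := by
  rw [← Finset.sum_product']
  refine Finset.sum_bij' (fun u _ => (u n, Function.update u n 0))
    (fun q _ => Function.update q.2 n q.1) ?_ ?_ ?_ ?_ ?_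
  · intro u hu
    simp only [assignments, Finset.mem_product, Finset.mem_filter, Finset.mem_univ, true_and,
      Finset.mem_insert, not_or] at hu ⊢
    intro k hk
    by_cases hkn : k = n
    · simp [hkn]
    · simp [hkn, hu k ⟨hkn, hk⟩]
  · rintro ⟨y, u⟩ hu
    simp only [assignments, Finset.mem_product, Finset.mem_filter, Finset.mem_univ, true_and,
      Finset.mem_insert, not_or] at hu ⊢
    intro k hk
    simp [hk.1, hu k hk.2]
  · intro u _
    simp
  · rintro ⟨y, u⟩ hu
    simp only [assignments, Finset.mem_product, Finset.mem_filter, Finset.mem_univ, true_and] at hu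
    ext k
    · simp
    · by_cases hkn : k = n
      · simp [hkn, hu n hn]
      · simp [hkn]
  · intro u _
    simp

lemma sum_assignments_prod (S : Finset (Fin N)) (f : Fin N → Fin 2 → ℝ) :
    ∑ u ∈ assignments S, ∏ k ∈ S, f k (u k) = ∏ k ∈ S, ∑ y, f k y := by
  induction S using Finset.induction_on with
  | empty =>
    have : (assignments (∅ : Finset (Fin N))) = {0} := by
      ext u
      simp [assignments, funext_iff]
    simp [this]
  | insert a s ha ih =>
    rw [sum_assignments_insert ha, Finset.prod_insert ha, ← ih, Finset.sum_mul]
    refine Finset.sum_congr rfl fun y _ => ?_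
    rw [Finset.mul_sum]
    refine Finset.sum_congr rfl fun u _ => ?_
    rw [Finset.prod_insert ha, Function.update_self]
    congr 1
    refine Finset.prod_congr rfl fun k hk => ?_
    rw [Function.update_of_ne (ne_of_mem_of_not_mem hk ha)]

/-! ### Order structure of the tree -/

lemma mem_parents {T : RevTree N} {k n : Fin N} : k ∈ T.parents n ↔ T.child k = some n := by
  simp [RevTree.parents]

lemma mem_tree {T : RevTree N} {m n : Fin N} :
    m ∈ T.tree n ↔ Relation.ReflTransGen (fun a b => T.child a = some b) m n := by
  simp [RevTree.tree]

lemma wf_child (T : RevTree N) : WellFounded (fun a b : Fin N => T.child a = some b) := by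
  have : Std.Irrefl (Relation.TransGen (fun a b : Fin N => T.child a = some b)) := ⟨T.acyclic⟩
  exact (Finite.wellFounded_of_trans_of_irrefl
    (Relation.TransGen (fun a b : Fin N => T.child a = some b))).mono
      fun a b h => Relation.TransGen.single h

lemma wf_child_swap (T : RevTree N) : WellFounded (fun a b : Fin N => T.child b = some a) := by
  have h1 : Std.Irrefl (Function.swap (Relation.TransGen (fun a b : Fin N => T.child a = some b))) :=
    ⟨T.acyclic⟩
  have h2 : IsTrans (Fin N)
      (Function.swap (Relation.TransGen (fun a b : Fin N => T.child a = some b))) :=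
    ⟨fun _ _ _ h h' => Relation.TransGen.trans h' h⟩
  exact (Finite.wellFounded_of_trans_of_irrefl
    (Function.swap (Relation.TransGen (fun a b : Fin N => T.child a = some b)))).mono
      fun a b h => Relation.TransGen.single h

lemma not_mem_tree_of_child {T : RevTree N} {n c : Fin N} (h : T.child n = some c) :
    c ∉ T.tree n := fun hc =>
  T.acyclic c (Relation.TransGen.tail' (mem_tree.1 hc) h)

lemma tree_subset_of_child {T : RevTree N} {n c : Fin N} (h : T.child n = some c) :
    T.tree n ⊆ T.tree c := fun _ hm => mem_tree.2 ((mem_tree.1 hm).tail h)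

lemma mem_tree_self {T : RevTree N} (n : Fin N) : n ∈ T.tree n := mem_tree.2 .refl

/-- Distinct parents `n`, `k` of the same node have disjoint trees: a common element would, child
edges being functional, put one of them on the path leaving the other, hence on a cycle. -/
lemma not_mem_tree_of_sibling {T : RevTree N} {n k c m : Fin N} (hn : T.child n = some c)
    (hk : T.child k = some c) (hkn : k ≠ n) (hm : m ∈ T.tree k) : m ∉ T.tree n := by
  have key : ∀ {a b : Fin N}, T.child a = some c → T.child b = some c → a ≠ b →
      ¬ Relation.ReflTransGen (fun a b => T.child a = some b) a b := by
    intro a b ha hb hab h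
    rcases Relation.ReflTransGen.cases_head h with h | ⟨d, had, hdb⟩
    · exact hab h
    · rw [ha, Option.some.injEq] at had
      subst had
      exact not_mem_tree_of_child hb (mem_tree.2 hdb)
  intro hm'
  rcases Relation.ReflTransGen.total_of_right_unique
    (fun a b c hb hc => Option.some.inj (hb.symm.trans hc)) (mem_tree.1 hm) (mem_tree.1 hm') with h | h
  · exact key hk hn hkn h
  · exact key hn hk hkn.symm h

/-! ### Class factors and forward messages for general weights -/

/-- The class factor of node `n` with own label `y` and parent labels read off `u`; it treats leaves
and non-leaves uniformly. -/
noncomputable def kern (T : RevTree N) (π ρ : ℝ) (n : Fin N) (y : Fin 2) (u : Fin N → Fin 2) : ℝ :=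
  if T.IsLeaf n then leafPrior π y else transProb ρ (y : ℕ) (∏ k ∈ T.parents n, (u k : ℕ))

lemma kern_congr (T : RevTree N) (π ρ : ℝ) (n : Fin N) (y : Fin 2) {u v : Fin N → Fin 2}
    (h : ∀ k ∈ T.parents n, u k = v k) : kern T π ρ n y u = kern T π ρ n y v := by
  unfold kern
  rw [Finset.prod_congr rfl fun k hk => by rw [h k hk]]

lemma sum_transProb (ρ : ℝ) {z : ℕ} (hz : z = 0 ∨ z = 1) :
    ∑ y : Fin 2, transProb ρ (y : ℕ) z = 1 := by
  rcases hz with rfl | rfl <;> simp [transProb]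

lemma prod_labels (S : Finset (Fin N)) (u : Fin N → Fin 2) :
    (∏ k ∈ S, (u k : ℕ)) = 0 ∨ (∏ k ∈ S, (u k : ℕ)) = 1 := by
  refine Finset.prod_induction _ (fun z : ℕ => z = 0 ∨ z = 1) ?_ (Or.inr rfl) ?_
  · rintro a b (rfl | rfl) (rfl | rfl) <;> simp
  · intro k _
    have := (u k).isLt
    omega

lemma sum_kern (T : RevTree N) (π ρ : ℝ) (n : Fin N) (u : Fin N → Fin 2) :
    ∑ y, kern T π ρ n y u = 1 := by
  unfold kern
  split_ifs
  · simp [leafPrior]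
  · exact sum_transProb ρ (prod_labels _ _)

/-- `fo` is the family of forward outgoing messages of the tree when the feature likelihoods are
replaced by the weights `w`. -/
def IsForward (T : RevTree N) (π ρ : ℝ) (w fo : Fin N → Fin 2 → ℝ) : Prop :=
  ∀ n y, fo n y = (∑ u ∈ assignments (T.parents n),
    kern T π ρ n y u * ∏ k ∈ T.parents n, fo k (u k)) * w n y

lemma exists_isForward (T : RevTree N) (π ρ : ℝ) (w : Fin N → Fin 2 → ℝ) :
    ∃ fo, IsForward T π ρ w fo := by
  refine ⟨(wf_child T).fix (fun n rec y => (∑ u ∈ assignments (T.parents n),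
    kern T π ρ n y u * ∏ k ∈ (T.parents n).attach, rec k.1 (mem_parents.1 k.2) (u k.1)) * w n y),
    fun n y => ?_⟩
  rw [WellFounded.fix_eq]
  congr 1
  refine Finset.sum_congr rfl fun u _ => ?_
  congr 1
  exact Finset.prod_attach (T.parents n) 
    (fun k => WellFounded.fix (C := fun _ => Fin 2 → ℝ) (wf_child T) _ k (u k))

/-- The forward message out of `n` depends only on the weights on `tree n`. -/
lemma IsForward.congr {T : RevTree N} {π ρ : ℝ} {w w' fo fo' : Fin N → Fin 2 → ℝ}
    (h : IsForward T π ρ w fo) (h' : IsForward T π ρ w' fo') (n : Fin N)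
    (hw : ∀ m ∈ T.tree n, w m = w' m) : fo n = fo' n := by
  induction n using (wf_child T).induction with
  | _ n ih =>
    funext y
    rw [h n y, h' n y, hw n (mem_tree_self n)]
    congr 1
    refine Finset.sum_congr rfl fun u _ => ?_
    congr 1
    refine Finset.prod_congr rfl fun k hk => ?_
    have hk' := mem_parents.1 hk
    rw [ih k hk' fun m hm => hw m (tree_subset_of_child hk' hm)]

lemma IsForward.sum_eq_one {T : RevTree N} {π ρ : ℝ} {fo : Fin N → Fin 2 → ℝ}
    (h : IsForward T π ρ (fun _ _ => 1) fo) (n : Fin N) : ∑ y, fo n y = 1 := by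
  induction n using (wf_child T).induction with
  | _ n ih =>
    simp only [h n, mul_one]
    rw [Finset.sum_comm]
    simp only [← Finset.sum_mul, sum_kern, one_mul]
    rw [sum_assignments_prod]
    exact Finset.prod_eq_one fun k hk => ih k (mem_parents.1 hk)

/-! ### Variable elimination -/

/-- The sum over all labelings of the product of node weights and class factors. -/
noncomputable def partitionFn (T : RevTree N) (π ρ : ℝ) (w : Fin N → Fin 2 → ℝ) : ℝ :=
  ∑ Y : Fin N → Fin 2, ∏ m, w m (Y m) * nodeFactor T π ρ Y m

open scoped Classical in
/-- The factor of node `m` after the nodes of `A` have been absorbed into forward messages: the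
original factor outside `A`, the message `fo m` if `m ∈ A` but its child is not in `A`, and the
indicator that pins the already summed-out label to `0` if the child is also in `A`. -/
noncomputable def elimFactor (T : RevTree N) (π ρ : ℝ) (w fo : Fin N → Fin 2 → ℝ)
    (A : Finset (Fin N)) (m : Fin N) (Y : Fin N → Fin 2) : ℝ :=
  if m ∉ A then w m (Y m) * kern T π ρ m (Y m) Y
  else if ∃ c ∈ A, T.child m = some c then (if Y m = 0 then 1 else 0) else fo m (Y m)

/-- Absorbing a node `n` all of whose parents have been absorbed does not change the total sum. -/
lemma elim_step {T : RevTree N} {π ρ : ℝ} {w fo : Fin N → Fin 2 → ℝ}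
    (h : IsForward T π ρ w fo) {A : Finset (Fin N)}
    (hA : ∀ m ∈ A, T.parents m ⊆ A) {n : Fin N} (hn : n ∉ A) (hP : T.parents n ⊆ A) :
    ∑ Y, ∏ m, elimFactor T π ρ w fo A m Y =
      ∑ Y, ∏ m, elimFactor T π ρ w fo (insert n A) m Y := by
  classical
  set P := T.parents n with hPdef
  have hnP : n ∉ P := fun hh => hn (hP hh)
  set R : Finset (Fin N) := (insert n P)ᶜ with hR
  have hsplit : ∀ F : Fin N → ℝ, ∏ m, F m = F n * (∏ k ∈ P, F k) * ∏ m ∈ R, F m := by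
    intro F
    rw [← Finset.prod_mul_prod_compl (insert n P) F, Finset.prod_insert hnP]
  -- the factors away from `n` and its parents are unaffected by absorbing `n`
  have hRsame : ∀ m ∈ R, ∀ Y, elimFactor T π ρ w fo (insert n A) m Y =
      elimFactor T π ρ w fo A m Y := by
    intro m hm Y
    simp only [hR, Finset.mem_compl, Finset.mem_insert, not_or, hPdef, mem_parents] at hm
    simp [elimFactor, Finset.mem_insert, hm.1, hm.2]
  -- and they do not involve the labels of the parents of `n`
  have hRindep : ∀ m ∈ R, ∀ Y Y' : Fin N → Fin 2, (∀ k ∉ P, Y k = Y' k) →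
      elimFactor T π ρ w fo A m Y = elimFactor T π ρ w fo A m Y' := by
    intro m hm Y Y' hY
    simp only [hR, Finset.mem_compl, Finset.mem_insert, not_or] at hm
    unfold elimFactor
    rw [hY m hm.2, kern_congr T π ρ m (Y' m) (u := Y) (v := Y')]
    intro k hk
    refine hY k fun hk' => hm.1 ?_
    rw [hPdef, mem_parents] at hk'
    rw [mem_parents] at hk
    exact Option.some.inj (hk.symm.trans hk')
  have hPA : ∀ k ∈ P, ∀ Y, elimFactor T π ρ w fo A k Y = fo k (Y k) := by
    intro k hk Y
    have hk' : T.child k = some n := mem_parents.1 hk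
    simp [elimFactor, hP hk, hk', hn]
  have hPB : ∀ k ∈ P, ∀ Y, elimFactor T π ρ w fo (insert n A) k Y =
      if Y k = 0 then 1 else 0 := by
    intro k hk Y
    have hk' : T.child k = some n := mem_parents.1 hk
    simp [elimFactor, hP hk, hk']
  have hnA : ∀ Y, elimFactor T π ρ w fo A n Y = w n (Y n) * kern T π ρ n (Y n) Y := by
    intro Y
    simp [elimFactor, hn]
  have hnB : ∀ Y, elimFactor T π ρ w fo (insert n A) n Y = fo n (Y n) := by
    intro Y
    have h1 : ¬ ∃ c ∈ insert n A, T.child n = some c := by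
      rintro ⟨c, hc, hnc⟩
      rcases Finset.mem_insert.1 hc with rfl | hc
      · exact T.acyclic _ (Relation.TransGen.single hnc)
      · exact hn (hA c hc (mem_parents.2 hnc))
    unfold elimFactor
    rw [if_neg (by simp), if_neg h1]
  have hB : ∑ Y, ∏ m, elimFactor T π ρ w fo (insert n A) m Y =
      ∑ v ∈ assignments Pᶜ, fo n (v n) * ∏ m ∈ R, elimFactor T π ρ w fo A m v := by
    unfold assignments
    rw [Finset.sum_filter]
    refine Finset.sum_congr rfl fun Y _ => ?_
    rw [hsplit, hnB, Finset.prod_congr rfl fun k hk => hPB k hk Y,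
      Finset.prod_congr rfl fun k hk => hRsame k hk Y, Finset.prod_ite_zero]
    simp
  rw [hB, sum_split P]
  refine Finset.sum_congr rfl fun v _ => ?_
  rw [h n (v n), Finset.sum_mul, Finset.sum_mul]
  refine Finset.sum_congr rfl fun u _ => ?_
  rw [hsplit, hnA, Finset.prod_congr rfl fun k hk => hPA k hk _,
    Finset.prod_congr rfl fun k hk => hRindep k hk _ v fun j hj => by simp [hj],
    kern_congr T π ρ n _ (v := u) fun k hk => by rw [if_pos hk],
    Finset.prod_congr rfl fun k hk => by rw [if_pos hk]]
  simp only [hnP, if_false]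
  ring

lemma partitionFn_eq_sum_forward_root {T : RevTree N} {π ρ : ℝ} {w fo : Fin N → Fin 2 → ℝ}
    (h : IsForward T π ρ w fo) : partitionFn T π ρ w = ∑ y, fo T.root y := by
  classical
  -- a largest parent-closed set whose absorption preserves the sum must contain every node
  let Good : Finset (Finset (Fin N)) := Finset.univ.filter fun A =>
    (∀ m ∈ A, T.parents m ⊆ A) ∧
      partitionFn T π ρ w = ∑ Y, ∏ m, elimFactor T π ρ w fo A m Y
  have hne : Good.Nonempty := by
    refine ⟨∅, ?_⟩
    simp [Good, elimFactor, partitionFn, nodeFactor, kern]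
  obtain ⟨A, hAG, hmax⟩ := Good.exists_max_image Finset.card hne
  obtain ⟨hA, hZ⟩ := (Finset.mem_filter.1 hAG).2
  have hAuniv : ∀ m, m ∈ A := by
    by_contra! hex
    obtain ⟨n, hn, hmin⟩ := (wf_child T).has_min {m | m ∉ A} hex
    have hP : T.parents n ⊆ A := by
      intro k hk
      by_contra hkA
      exact hmin k hkA (mem_parents.1 hk)
    have hG : insert n A ∈ Good := by
      refine Finset.mem_filter.2 ⟨Finset.mem_univ _, ?_, hZ.trans (elim_step h hA hn hP)⟩
      intro m hm
      rcases Finset.mem_insert.1 hm with rfl | hm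
      · exact hP.trans (Finset.subset_insert _ _)
      · exact (hA m hm).trans (Finset.subset_insert _ _)
    have := hmax _ hG
    rw [Finset.card_insert_of_notMem hn] at this
    omega
  rw [hZ]
  have hfac : ∀ Y, ∏ m, elimFactor T π ρ w fo A m Y =
      if ∀ m ∉ ({T.root} : Finset (Fin N)), Y m = 0 then fo T.root (Y T.root) else 0 := by
    intro Y
    rw [← Finset.mul_prod_erase _ _ (Finset.mem_univ T.root)]
    have h1 : elimFactor T π ρ w fo A T.root Y = fo T.root (Y T.root) := by
      simp [elimFactor, hAuniv, T.child_root]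
    have h2 : ∀ m ∈ Finset.univ.erase T.root, elimFactor T π ρ w fo A m Y =
        if Y m = 0 then 1 else 0 := by
      intro m hm
      have : ∃ c, T.child m = some c := by
        rw [← Option.ne_none_iff_exists']
        exact fun hc => (Finset.mem_erase.1 hm).1 (T.root_unique m hc)
      simp [elimFactor, hAuniv, this]
    rw [h1, Finset.prod_congr rfl h2, Finset.prod_ite_zero]
    simp
  simp only [hfac]
  rw [← Finset.sum_filter]
  have := sum_assignments_insert (Finset.notMem_empty T.root)
    (fun Y : Fin N → Fin 2 => fo T.root (Y T.root))
  have h0 : (assignments (∅ : Finset (Fin N))) = {0} := by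
    ext u
    simp [assignments, funext_iff]
  rw [h0] at this
  simpa [assignments] using this

/-! ### Combining forward and backward messages -/

/-- The partition function factors through any node `n` as forward times backward message, even when
the weights on `tree n` differ from those used for the backward messages. -/
lemma partitionFn_eq_sum_forward_mul_backward {T : RevTree N} {π ρ : ℝ}
    {px fo gi : Fin N → Fin 2 → ℝ} (hf : IsForward T π ρ px fo)
    (hroot : ∀ y : Fin 2, gi T.root y = 1)
    (hgi : ∀ n c, T.child n = some c → ∀ y : Fin 2,
      gi n y = ∑ yc : Fin 2, ∑ u ∈ assignments (T.siblings n c),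
        gi c yc * px c yc *
          transProb ρ (yc : ℕ) ((y : ℕ) * ∏ k ∈ T.siblings n c, (u k : ℕ)) *
          ∏ k ∈ T.siblings n c, fo k (u k))
    (n : Fin N) {w fw : Fin N → Fin 2 → ℝ} (hw : ∀ m ∉ T.tree n, w m = px m)
    (hfw : IsForward T π ρ w fw) :
    partitionFn T π ρ w = ∑ y, fw n y * gi n y := by
  induction n using (wf_child_swap T).induction with
  | _ n ih =>
    rcases hc : T.child n with _ | c
    · obtain rfl := T.root_unique n hc
      simp [hroot, partitionFn_eq_sum_forward_root hfw]
    · rw [ih c hc fun m hm => hw m fun hm' => hm (tree_subset_of_child hc hm')]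
      have hleaf : ¬ T.IsLeaf c := fun hl => by
        have hnc := mem_parents.2 hc
        rw [hl] at hnc
        exact Finset.notMem_empty _ hnc
      have hnS : n ∉ T.siblings n c := by simp [RevTree.siblings]
      have hPc : T.parents c = insert n (T.siblings n c) := by
        rw [RevTree.siblings, Finset.sdiff_singleton_eq_erase,
          Finset.insert_erase (mem_parents.2 hc)]
      have hsib : ∀ k ∈ T.siblings n c, fw k = fo k := by
        intro k hk
        simp only [RevTree.siblings, Finset.mem_sdiff, mem_parents, Finset.mem_singleton] at hk
        exact hfw.congr hf k fun m hm => hw m (not_mem_tree_of_sibling hc hk.1 hk.2 hm)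
      have hup : ∀ (u : Fin N → Fin 2) (y : Fin 2), ∀ k ∈ T.siblings n c,
          Function.update u n y k = u k := fun u y k hk =>
        Function.update_of_ne (ne_of_mem_of_not_mem hk hnS) _ _
      have hexp : ∀ yc, fw c yc * gi c yc = ∑ y : Fin 2, ∑ u ∈ assignments (T.siblings n c),
          fw n y * (gi c yc * px c yc *
            transProb ρ (yc : ℕ) ((y : ℕ) * ∏ k ∈ T.siblings n c, (u k : ℕ)) *
            ∏ k ∈ T.siblings n c, fo k (u k)) := by
        intro yc
        rw [hfw c yc, hw c (not_mem_tree_of_child hc)]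
        simp only [kern, if_neg hleaf]
        rw [hPc, sum_assignments_insert hnS, Finset.sum_mul, Finset.sum_mul]
        refine Finset.sum_congr rfl fun y _ => ?_
        rw [Finset.sum_mul, Finset.sum_mul]
        refine Finset.sum_congr rfl fun u _ => ?_
        rw [Finset.prod_insert hnS, Finset.prod_insert hnS, Function.update_self,
          Finset.prod_congr rfl fun k hk => by rw [hup u y k hk],
          Finset.prod_congr (g := fun k => fo k (u k)) rfl
            fun k hk => by rw [hup u y k hk, hsib k hk]]
        ring
      simp only [hexp]
      rw [Finset.sum_comm]
      refine Finset.sum_congr rfl fun y _ => ?_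
      rw [hgi n c hc y, Finset.mul_sum]
      refine Finset.sum_congr rfl fun yc _ => ?_
      rw [Finset.mul_sum]

/-- The node weights whose partition function is `P(x_S, y_n = y)`. -/
noncomputable def condWeight (px : Fin N → Fin 2 → ℝ) (S : Finset (Fin N)) (n : Fin N) (y : Fin 2)
    (m : Fin N) (z : Fin 2) : ℝ :=
  (if m ∈ S then px m z else 1) * (if m = n then (if z = y then 1 else 0) else 1)

lemma marginal_eq_partitionFn (T : RevTree N) (π ρ : ℝ) (px : Fin N → Fin 2 → ℝ)
    (S : Finset (Fin N)) (n : Fin N) (y : Fin 2) :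
    marginal T π ρ px S {n} (fun _ => y) = partitionFn T π ρ (condWeight px S n y) := by
  unfold marginal partitionFn
  rw [Finset.sum_filter]
  refine Finset.sum_congr rfl fun Y _ => ?_
  simp only [condWeight, Finset.prod_mul_distrib, Finset.prod_ite_mem, Finset.univ_inter,
    Finset.prod_ite_eq', Finset.mem_univ, if_true, Finset.mem_singleton, forall_eq]
  split_ifs <;> simp

/-- For likelihoods identically `1`, normalized forward messages make `1` a backward message. -/
lemma backward_one {T : RevTree N} {π ρ : ℝ} {fo : Fin N → Fin 2 → ℝ}
    (h : IsForward T π ρ (fun _ _ => 1) fo) (S : Finset (Fin N)) (y : Fin 2) :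
    ∑ yc : Fin 2, ∑ u ∈ assignments S,
      transProb ρ (yc : ℕ) ((y : ℕ) * ∏ k ∈ S, (u k : ℕ)) * ∏ k ∈ S, fo k (u k) = 1 := by
  rw [Finset.sum_comm]
  have hz : ∀ u : Fin N → Fin 2, ∑ yc : Fin 2,
      transProb ρ (yc : ℕ) ((y : ℕ) * ∏ k ∈ S, (u k : ℕ)) = 1 := by
    intro u
    refine sum_transProb ρ ?_
    have hy : (y : ℕ) = 0 ∨ (y : ℕ) = 1 := by omega
    rcases hy with hy | hy <;> rcases prod_labels S u with hu | hu <;> simp [hy, hu]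
  simp only [← Finset.sum_mul, hz, one_mul]
  rw [sum_assignments_prod]
  exact Finset.prod_eq_one fun k _ => h.sum_eq_one k

end HMT

/-- in a hidden Markov tree, the backward outgoing message satisfies
`g_n^o(y_n) · P(y_n) = P(x_{passed(n)}, y_n)` for every node `n` and label `y_n`,
where `P(y_n) = marginal ∅ {n}` is the label marginal of node `n`. -/
theorem backward_outgoing_message_eq_marginal
{N : ℕ} (T : RevTree N) (π ρ : ℝ)
    (hπ : π ∈ Set.Ioo (0 : ℝ) 1) (hρ : ρ ∈ Set.Ioo (0 : ℝ) 1)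
    (px : Fin N → Fin 2 → ℝ) (hpx : ∀ n y, 0 ≤ px n y)
(fi fo : Fin N → Fin 2 → ℝ)
    (hfiLeaf : ∀ n, T.IsLeaf n → ∀ y : Fin 2, fi n y = leafPrior π y)
    (hfiInt : ∀ n, ¬ T.IsLeaf n → ∀ y : Fin 2,
      fi n y = ∑ u ∈ assignments (T.parents n),
        transProb ρ (y : ℕ) (∏ k ∈ T.parents n, (u k : ℕ)) *
          ∏ k ∈ T.parents n, fo k (u k))
    (hfo : ∀ n y, fo n y = fi n y * px n y)
(gi go : Fin N → Fin 2 → ℝ)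
    (hgiRoot : ∀ y : Fin 2, gi T.root y = 1)
    (hgiInt : ∀ n c, T.child n = some c → ∀ y : Fin 2,
      gi n y = ∑ yc : Fin 2, ∑ u ∈ assignments (T.siblings n c),
        go c yc * transProb ρ (yc : ℕ) ((y : ℕ) * ∏ k ∈ T.siblings n c, (u k : ℕ)) *
          ∏ k ∈ T.siblings n c, fo k (u k))
    (hgo : ∀ n y, go n y = gi n y * px n y) :
    ∀ (n : Fin N) (y : Fin 2),
      go n y * marginal T π ρ px ∅ {n} (fun _ => y) =
        marginal T π ρ px (T.passed n) {n} (fun _ => y) := by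
  intro n y
  have hf : HMT.IsForward T π ρ px fo := by
    intro m z
    rw [hfo]
    congr 1
    by_cases hl : T.IsLeaf m
    · have hP : T.parents m = ∅ := hl
      have h0 : (assignments (∅ : Finset (Fin N))) = {0} := by
        ext u
        simp [assignments, funext_iff]
      rw [hfiLeaf m hl, hP, h0]
      simp [HMT.kern, hl]
    · rw [hfiInt m hl]
      simp only [HMT.kern, if_neg hl]
  have hnp : n ∈ T.passed n := by simp [RevTree.passed, RevTree.subtree]
  obtain ⟨f₁, hf₁⟩ := HMT.exists_isForward T π ρ (HMT.condWeight px (T.passed n) n y)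
  obtain ⟨f₂, hf₂⟩ := HMT.exists_isForward T π ρ (HMT.condWeight px ∅ n y)
  obtain ⟨f₀, hf₀⟩ := HMT.exists_isForward T π ρ (fun (_ : Fin N) (_ : Fin 2) => (1 : ℝ))
  have h₁ := HMT.partitionFn_eq_sum_forward_mul_backward hf hgiRoot
    (by simpa only [hgo] using hgiInt) n (fun m hm => by
      have hmn : m ≠ n := (ne_of_mem_of_not_mem (HMT.mem_tree_self n) hm).symm
      funext z
      simp [HMT.condWeight, RevTree.passed, RevTree.subtree, hm, hmn]) hf₁
  have h₂ := HMT.partitionFn_eq_sum_forward_mul_backward (gi := fun _ _ => 1) hf₀ (fun _ => rfl)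
    (fun m c _ z => by
      simpa using (HMT.backward_one hf₀ (T.siblings m c) z).symm) n (fun m hm => by
      have hmn : m ≠ n := (ne_of_mem_of_not_mem (HMT.mem_tree_self n) hm).symm
      funext z
      simp [HMT.condWeight, hmn]) hf₂
  -- both sets of weights are `1` on the subtree, so the messages coming into `n` coincide
  have hpar : ∀ k ∈ T.parents n, f₁ k = f₂ k := by
    intro k hk
    have hk' := HMT.mem_parents.1 hk
    refine hf₁.congr hf₂ k fun m hm => ?_
    have hmn : m ≠ n := fun h => HMT.not_mem_tree_of_child hk' (h ▸ hm)
    have hmt := HMT.tree_subset_of_child hk' hm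
    funext z
    simp [HMT.condWeight, RevTree.passed, RevTree.subtree, hmn, hmt]
  have hin : ∀ z, ∑ u ∈ assignments (T.parents n),
      HMT.kern T π ρ n z u * ∏ k ∈ T.parents n, f₁ k (u k) =
      ∑ u ∈ assignments (T.parents n),
      HMT.kern T π ρ n z u * ∏ k ∈ T.parents n, f₂ k (u k) := fun z =>
    Finset.sum_congr rfl fun u _ => by
      rw [Finset.prod_congr rfl fun k hk => by rw [hpar k hk]]
  rw [HMT.marginal_eq_partitionFn, HMT.marginal_eq_partitionFn, h₁, h₂, hgo]
  simp only [hf₁ n, hf₂ n, hin, HMT.condWeight, hnp, if_true, Finset.notMem_empty, if_false,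
    mul_ite, mul_one, mul_zero, ite_mul, zero_mul, Finset.sum_ite_eq', Finset.mem_univ]
  ring
end
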